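/- Let (E^•, I_•, ∫) be a Cheeger–Simons model over 𝕂 and k ≥ 0. For ω ∈ E^k with dω = 0, one has ∫_α ω ∈ ℤ for all α ∈ Z_k(I_•) if and only if the class [ω̃] ∈ H^k(F^•) lies in Φ_*(H^k(I^•)). Equivalently: the image of E^k_0 in H^k(F^•) under the de Rham isomorphism (i.e., the set of classes [ω̃] for ω ∈ E^k_0) is exactly Φ_*(H^k(I^•)). -/

import Mathlib

open AddSubgroup

noncomputable section

/-- Cycles of an `ℕ`-indexed chain complex, with the convention `Z_0 = I_0`
(i.e. `∂ : I_0 → I_{-1} = 0`). -/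
def Zc {I : ℕ → Type*} [∀ i, AddCommGroup (I i)] (bd : ∀ k, I (k+1) →+ I k) :
    ∀ k, AddSubgroup (I k)
  | 0 => ⊤
  | n+1 => (bd n).ker

theorem mem_Zc_bd {I : ℕ → Type*} [∀ i, AddCommGroup (I i)] (bd : ∀ k, I (k+1) →+ I k)
    (hbd : ∀ k x, bd k (bd (k+1) x) = 0) :
    ∀ (k : ℕ) (β : I (k+1)), bd k β ∈ Zc bd k
  | 0, _ => mem_top _
  | n+1, β => by simpa [Zc, AddMonoidHom.mem_ker] using hbd n β

/-- Coboundaries of an `ℕ`-indexed cochain complex, with the convention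
`B^0 = 0`. -/
def Bc {E : ℕ → Type*} [∀ i, AddCommGroup (E i)] (d : ∀ k, E k →+ E (k+1)) :
    ∀ k, AddSubgroup (E k)
  | 0 => ⊥
  | n+1 => (d n).range

/-- Cohomology of an `ℕ`-indexed cochain complex. -/
abbrev Hc {E : ℕ → Type*} [∀ i, AddCommGroup (E i)] (d : ∀ k, E k →+ E (k+1)) (k : ℕ) :=
  ↥(d k).ker ⧸ ((Bc d k).addSubgroupOf (d k).ker)

/-- The class of a cocycle in cohomology. -/
def Hmk {E : ℕ → Type*} [∀ i, AddCommGroup (E i)] (d : ∀ k, E k →+ E (k+1)) (k : ℕ) :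
    ↥(d k).ker →+ Hc d k := QuotientAddGroup.mk' _

/-- The codifferential on `Hom(I_•, A)` induced by the boundary map of `I_•`. -/
def codiff {I : ℕ → Type*} [∀ i, AddCommGroup (I i)] (bd : ∀ k, I (k+1) →+ I k)
    (A : Type*) [AddCommGroup A] (k : ℕ) : (I k →+ A) →+ (I (k+1) →+ A) :=
  AddMonoidHom.mk' (fun h => h.comp (bd k)) (fun h g => by ext x; simp)

/-- `ℤ` regarded as an additive subgroup of `𝕂`. -/
def intSub (𝕂 : Type*) [Field 𝕂] : AddSubgroup 𝕂 := zmultiples (1 : 𝕂)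

/-- The group `𝕂/ℤ`. -/
abbrev KmodZ (𝕂 : Type*) [Field 𝕂] := 𝕂 ⧸ intSub 𝕂

/-- The quotient map `q : 𝕂 → 𝕂/ℤ`. -/
def qZ (𝕂 : Type*) [Field 𝕂] : 𝕂 →+ KmodZ 𝕂 := QuotientAddGroup.mk' _

/-- The inclusion `Φ : Hom(I_k, ℤ) → Hom(I_k, 𝕂)`. -/
def PhiMap {I : ℕ → Type*} [∀ i, AddCommGroup (I i)] (𝕂 : Type*) [Field 𝕂] (k : ℕ) :
    (I k →+ ℤ) →+ (I k →+ 𝕂) :=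
  AddMonoidHom.mk' (fun h => (Int.castAddHom 𝕂).comp h) (fun a b => by ext x; simp)

/-- The differential character group `Diff^k` of a Cheeger–Simons model. -/
def DiffChar {𝕂 : Type*} [Field 𝕂] {I E : ℕ → Type*}
    [∀ i, AddCommGroup (I i)] [∀ i, AddCommGroup (E i)]
    (bd : ∀ k, I (k+1) →+ I k) (hbd : ∀ k x, bd k (bd (k+1) x) = 0)
    (pair : ∀ k, E k →+ (I k →+ 𝕂)) (k : ℕ) :
    AddSubgroup ((Zc bd k) →+ KmodZ 𝕂) where
  carrier := {f | ∃ ω : E (k+1), ∀ β : I (k+1),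
      f ⟨bd k β, mem_Zc_bd bd hbd k β⟩ = qZ 𝕂 (pair (k+1) ω β)}
  add_mem' := by
    rintro f g ⟨ω, hω⟩ ⟨ω', hω'⟩
    exact ⟨ω + ω', fun β => by
      simp [AddMonoidHom.add_apply, hω β, hω' β]⟩
  zero_mem' := ⟨0, fun β => by simp [qZ]⟩
  neg_mem' := by
    rintro f ⟨ω, hω⟩
    exact ⟨-ω, fun β => by simp [AddMonoidHom.neg_apply, hω β]⟩

/-- The subgroup `E^k_0` of closed elements of `E^k` with integral periods. -/
def Ezero {𝕂 : Type*} [Field 𝕂] {I E : ℕ → Type*}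
    [∀ i, AddCommGroup (I i)] [∀ i, AddCommGroup (E i)]
    (bd : ∀ k, I (k+1) →+ I k) (d : ∀ k, E k →+ E (k+1))
    (pair : ∀ k, E k →+ (I k →+ 𝕂)) (k : ℕ) : AddSubgroup (E k) where
  carrier := {ω | d k ω = 0 ∧ ∀ α ∈ Zc bd k, pair k ω α ∈ intSub 𝕂}
  add_mem' := by
    rintro ω ω' ⟨h1, h2⟩ ⟨h1', h2'⟩
    refine ⟨by simp [h1, h1'], fun α hα => ?_⟩
    simpa [AddMonoidHom.add_apply] using add_mem (h2 α hα) (h2' α hα)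
  zero_mem' := ⟨by simp, fun α _ => by simp [zero_mem]⟩
  neg_mem' := by
    rintro ω ⟨h1, h2⟩
    exact ⟨by simp [h1], fun α hα => by
      simpa [AddMonoidHom.neg_apply] using neg_mem (h2 α hα)⟩

/-!
If `h : I_k → 𝕂` is integral on cycles, then `q ∘ h : I_k → 𝕂/ℤ` vanishes on `ker ∂`, so it equals
`w ∘ ∂` for some `w : I_{k-1} → 𝕂/ℤ`, because `𝕂/ℤ` is divisible and hence injective. As `I_{k-1}`
is free, `w` lifts to `v : I_{k-1} → 𝕂`, and `h - δv` is integer-valued on all of `I_k`.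
Conversely, coboundaries vanish on cycles. Stokes turns `dω = 0` into `δω̃ = 0`, so all this applies
to `h = ω̃`.
-/

section DivisibleGroups

variable {A B : Type*} [AddCommGroup A] [AddCommGroup B]

theorem exists_comp_eq_of_ker_le {D : Type*} [AddCommGroup D] [DivisibleBy D ℤ]
    (b : A →+ B) (f : A →+ D) (h : b.ker ≤ f.ker) : ∃ w : B →+ D, w.comp b = f := by
  obtain ⟨w, hw⟩ := (Module.Baer.of_divisible D).extension_property_addMonoidHom
    (QuotientAddGroup.kerLift b) (QuotientAddGroup.kerLift_injective b)
    (QuotientAddGroup.lift b.ker f h)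
  exact ⟨w, AddMonoidHom.ext fun a => DFunLike.congr_fun hw (a : A ⧸ b.ker)⟩

theorem exists_sub_comp_mem_of_ker_mem [Module.Projective ℤ B]
    {G : Type*} [AddCommGroup G] [DivisibleBy G ℤ] (S : AddSubgroup G)
    (b : A →+ B) (g : A →+ G) (h : ∀ a ∈ b.ker, g a ∈ S) :
    ∃ v : B →+ G, ∀ a, g a - v (b a) ∈ S := by
  let q : G →+ G ⧸ S := QuotientAddGroup.mk' S
  have hq : Function.Surjective q := QuotientAddGroup.mk'_surjective S
  let _ : DivisibleBy (G ⧸ S) ℤ := hq.divisibleBy q fun x n => map_zsmul q n x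
  obtain ⟨w, hw⟩ := exists_comp_eq_of_ker_le b (q.comp g) fun a ha =>
    (QuotientAddGroup.eq_zero_iff (g a)).mpr (h a ha)
  obtain ⟨v, hv⟩ := Module.projective_lifting_property q.toIntLinearMap w.toIntLinearMap hq
  refine ⟨v.toAddMonoidHom, fun a => QuotientAddGroup.eq_iff_sub_mem.mp ?_⟩
  calc q (g a) = w (b a) := (DFunLike.congr_fun hw a).symm
    _ = q (v (b a)) := (LinearMap.congr_fun hv (b a)).symm

end DivisibleGroups

section Cochains

variable {I : ℕ → Type*} [∀ i, AddCommGroup (I i)] {bd : ∀ k, I (k + 1) →+ I k}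

theorem codiff_eq_zero_of_mem_Bc {A : Type*} [AddCommGroup A]
    (hbd : ∀ k x, bd k (bd (k + 1) x) = 0) {k : ℕ} {c : I k →+ A} (hc : c ∈ Bc (codiff bd A) k) :
    codiff bd A k c = 0 := by
  cases k with
  | zero => rw [mem_bot.mp hc, map_zero]
  | succ n =>
    obtain ⟨v, rfl⟩ := hc
    ext x
    change v (bd n (bd (n + 1) x)) = 0
    rw [hbd, map_zero]

theorem apply_eq_zero_of_mem_Bc_of_mem_Zc {A : Type*} [AddCommGroup A] {k : ℕ} {c : I k →+ A}
    (hc : c ∈ Bc (codiff bd A) k) {α : I k} (hα : α ∈ Zc bd k) : c α = 0 := by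
  cases k with
  | zero => exact DFunLike.congr_fun (mem_bot.mp hc) α
  | succ n =>
    obtain ⟨v, rfl⟩ := hc
    exact (congrArg v hα).trans (map_zero v)

theorem forall_mem_Zc_apply_mem_iff [∀ i, Module.Projective ℤ (I i)]
    {G : Type*} [AddCommGroup G] [DivisibleBy G ℤ] (S : AddSubgroup G) {k : ℕ} (h : I k →+ G) :
    (∀ α ∈ Zc bd k, h α ∈ S) ↔ ∃ c ∈ Bc (codiff bd G) k, ∀ x, (h - c) x ∈ S := by
  constructor
  · intro hS
    cases k with
    | zero => exact ⟨0, zero_mem _, fun x => by simpa using hS x (mem_top x)⟩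
    | succ n =>
      obtain ⟨v, hv⟩ := exists_sub_comp_mem_of_ker_mem S (bd n) h hS
      exact ⟨codiff bd G n v, ⟨v, rfl⟩, hv⟩
  · rintro ⟨c, hc, hS⟩ α hα
    simpa [apply_eq_zero_of_mem_Bc_of_mem_Zc hc hα] using hS α

variable {𝕂 : Type*} [Field 𝕂] {k : ℕ}

theorem codiff_PhiMap (u : I k →+ ℤ) :
    codiff bd 𝕂 k (PhiMap 𝕂 k u) = PhiMap 𝕂 (k + 1) (codiff bd ℤ k u) :=
  rfl

variable [CharZero 𝕂]

theorem PhiMap_injective : Function.Injective (PhiMap (I := I) 𝕂 k) := fun _ _ huv =>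
  AddMonoidHom.ext fun x => Int.cast_injective (DFunLike.congr_fun huv x)

theorem mem_range_PhiMap_iff {h : I k →+ 𝕂} :
    h ∈ (PhiMap 𝕂 k).range ↔ ∀ x, h x ∈ intSub 𝕂 := by
  constructor
  · rintro ⟨u, rfl⟩ x
    exact intCast_mem_zmultiples_one (u x)
  · intro hint
    have hcast : ∀ x, ∃ n : ℤ, (n : 𝕂) = h x := fun x => by
      simpa [intSub, mem_zmultiples_iff] using hint x
    choose u hu using hcast
    have map_add_u : ∀ x y, u (x + y) = u x + u y := fun x y =>
      Int.cast_injective (α := 𝕂) (by simp only [Int.cast_add, hu, map_add])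
    exact ⟨AddMonoidHom.mk' u map_add_u, AddMonoidHom.ext hu⟩

theorem statement5_general [∀ i, Module.Projective ℤ (I i)]
    (hbd : ∀ k x, bd k (bd (k + 1) x) = 0) {h : I k →+ 𝕂} (hh : codiff bd 𝕂 k h = 0) :
    (∀ α ∈ Zc bd k, h α ∈ intSub 𝕂) ↔
      ∃ u : I k →+ ℤ, u ∈ (codiff bd ℤ k).ker ∧ h - PhiMap 𝕂 k u ∈ Bc (codiff bd 𝕂) k := by
  simp only [forall_mem_Zc_apply_mem_iff, ← mem_range_PhiMap_iff]
  constructor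
  · rintro ⟨c, hc, u, hu⟩
    have closed_u : codiff bd ℤ k u = 0 := PhiMap_injective (𝕂 := 𝕂) <| by
      rw [← codiff_PhiMap, hu, map_sub, hh, codiff_eq_zero_of_mem_Bc hbd hc, sub_zero, map_zero]
    exact ⟨u, closed_u, by rwa [hu, sub_sub_cancel]⟩
  · rintro ⟨u, -, hB⟩
    exact ⟨h - PhiMap 𝕂 k u, hB, u, (sub_sub_cancel h _).symm⟩

end Cochains

/-- For closed `ω ∈ E^k`, `ω` has integral periods on `Z_k(I_•)` iff the
class `[ω̃] ∈ H^k(F^•)` lies in `Φ_*(H^k(I^•))`, i.e. iff `ω̃ - Φ(u)` is a coboundary for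
some closed integral cochain `u`.  Thus the image of `E^k_0` in `H^k(F^•)` under the
de Rham isomorphism is exactly `Φ_*(H^k(I^•))`. -/
theorem statement5
    {𝕂 : Type*} [Field 𝕂] [CharZero 𝕂]
    (I E : ℕ → Type*)
    [∀ i, AddCommGroup (I i)] [∀ i, Module.Free ℤ (I i)]
    [∀ i, AddCommGroup (E i)] [∀ i, Module 𝕂 (E i)]
    (bd : ∀ k, I (k+1) →+ I k)
    (hbd : ∀ k x, bd k (bd (k+1) x) = 0)
    (d : ∀ k, E k →+ E (k+1))
    (hd : ∀ k x, d (k+1) (d k x) = 0)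
    (hdsmul : ∀ (k : ℕ) (c : 𝕂) (e : E k), d k (c • e) = c • d k e)
    (pair : ∀ k, E k →+ (I k →+ 𝕂))
    (pair_smul : ∀ (k : ℕ) (c : 𝕂) (e : E k) (x : I k), pair k (c • e) x = c * pair k e x)
    (pair_injE : ∀ k, Function.Injective (pair k))
    (pair_injI : ∀ (k : ℕ) (x y : I k), (∀ e : E k, pair k e x = pair k e y) → x = y)
    (int_triv : ∀ (k : ℕ) (e : E k), (∀ β : I k, pair k e β ∈ intSub 𝕂) → e = 0)
    (stokes : ∀ (k : ℕ) (e : E k) (α : I (k+1)), pair k e (bd k α) = pair (k+1) (d k e) α)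
    (deRham_inj : ∀ (k : ℕ) (e : E k), d k e = 0 → pair k e ∈ Bc (codiff bd 𝕂) k → e ∈ Bc d k)
    (deRham_surj : ∀ (k : ℕ) (h : I k →+ 𝕂), codiff bd 𝕂 k h = 0 →
      ∃ e : E k, d k e = 0 ∧ h - pair k e ∈ Bc (codiff bd 𝕂) k)
    (k : ℕ) :
    ∀ ω : E k, d k ω = 0 →
      ((∀ α ∈ Zc bd k, pair k ω α ∈ intSub 𝕂) ↔
        ∃ u : I k →+ ℤ, u ∈ (codiff bd ℤ k).ker ∧
          pair k ω - PhiMap 𝕂 k u ∈ Bc (codiff bd 𝕂) k) := by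
  intro ω hω
  refine statement5_general hbd (AddMonoidHom.ext fun α => ?_)
  calc pair k ω (bd k α) = pair (k + 1) (d k ω) α := stokes k ω α
    _ = 0 := by rw [hω, map_zero, AddMonoidHom.zero_apply]

end
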